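/- (Maehara's lemma for first-order logic with identity) In the calculus G= (G extended with the rules Ref and Repl for identity), every partition Γ₁;Γ₂⇒Δ₁;Δ₂ of a derivable sequent Γ⇒Δ has a split-interpolant: there exists a formula C such that Γ₁⇒Δ₁,C and C,Γ₂⇒Δ₂ are derivable in G= and L(C) ⊆ L(Γ₁,Δ₁) ∩ L(Γ₂,Δ₂). -/

import Mathlib

/-- Terms: variables or individual constants (no function symbols). -/
inductive Tm where
  | var : ℕ → Tm
  | const : ℕ → Tm
deriving DecidableEq

/-- First-order formulas over a language with denumerably many predicates,
a logical identity predicate, ⊥, ⊤, ∧, ∨, →, ∀, ∃. -/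
inductive Fm where
  | rel : ℕ → List Tm → Fm
  | eq : Tm → Tm → Fm
  | bot : Fm
  | top : Fm
  | and : Fm → Fm → Fm
  | or : Fm → Fm → Fm
  | imp : Fm → Fm → Fm
  | all : ℕ → Fm → Fm
  | ex : ℕ → Fm → Fm
deriving DecidableEq

def Fm.isAtom : Fm → Prop
  | .rel _ _ => True
  | .eq _ _ => True
  | .bot => True
  | .top => True
  | _ => False

/-- Ter(A): the free variables and individual constants of A, as terms. -/
def Fm.ter : Fm → Finset Tm
  | .rel _ ts => ts.toFinset
  | .eq a b => {a, b}
  | .bot => ∅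
  | .top => ∅
  | .and A B => A.ter ∪ B.ter
  | .or A B => A.ter ∪ B.ter
  | .imp A B => A.ter ∪ B.ter
  | .all x A => A.ter.erase (Tm.var x)
  | .ex x A => A.ter.erase (Tm.var x)

/-- Rel(A): the non-logical predicate symbols of A (identity, ⊥, ⊤ are logical). -/
def Fm.rels : Fm → Finset ℕ
  | .rel r _ => {r}
  | .eq _ _ => ∅
  | .bot => ∅
  | .top => ∅
  | .and A B => A.rels ∪ B.rels
  | .or A B => A.rels ∪ B.rels
  | .imp A B => A.rels ∪ B.rels
  | .all _ A => A.rels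
  | .ex _ A => A.rels

def Tm.consts : Tm → Finset ℕ
  | .var _ => ∅
  | .const c => {c}

/-- The individual constants occurring in A. -/
def Fm.consts : Fm → Finset ℕ
  | .rel _ ts => ts.foldr (fun t s => t.consts ∪ s) ∅
  | .eq a b => a.consts ∪ b.consts
  | .bot => ∅
  | .top => ∅
  | .and A B => A.consts ∪ B.consts
  | .or A B => A.consts ∪ B.consts
  | .imp A B => A.consts ∪ B.consts
  | .all _ A => A.consts
  | .ex _ A => A.consts

/-- L(A) = Ter(A) ∪ Rel(A). -/
def Fm.lang (A : Fm) : Finset (Tm ⊕ ℕ) :=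
  A.ter.image Sum.inl ∪ A.rels.image Sum.inr

/-- Ter of a multiset of formulas. -/
def terM (Γ : Multiset Fm) : Finset Tm := (Γ.map Fm.ter).sup

/-- L of a multiset of formulas. -/
def langM (Γ : Multiset Fm) : Finset (Tm ⊕ ℕ) := (Γ.map Fm.lang).sup

/-- s[t/u]: substitute the term t for the term u (a variable or a constant) in s. -/
def Tm.subst (s u t : Tm) : Tm := if s = u then t else s

/-- A[t/u]: substitute the term t for the term u in A (bound occurrences
of a variable u are not replaced). -/
def Fm.subst : Fm → Tm → Tm → Fm
  | .rel r ts, u, t => .rel r (ts.map (fun s => s.subst u t))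
  | .eq a b, u, t => .eq (a.subst u t) (b.subst u t)
  | .bot, _, _ => .bot
  | .top, _, _ => .top
  | .and A B, u, t => .and (A.subst u t) (B.subst u t)
  | .or A B, u, t => .or (A.subst u t) (B.subst u t)
  | .imp A B, u, t => .imp (A.subst u t) (B.subst u t)
  | .all x A, u, t => if u = Tm.var x then .all x A else .all x (A.subst u t)
  | .ex x A, u, t => if u = Tm.var x then .ex x A else .ex x (A.subst u t)

/-- t is free for u in A (no free occurrence of u is in the scope of a
quantifier binding the variable t, if t is a variable). -/
def Fm.freeFor (t u : Tm) : Fm → Prop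
  | .and A B => A.freeFor t u ∧ B.freeFor t u
  | .or A B => A.freeFor t u ∧ B.freeFor t u
  | .imp A B => A.freeFor t u ∧ B.freeFor t u
  | .all x A => u ∉ (Fm.all x A).ter ∨ (t ≠ Tm.var x ∧ A.freeFor t u)
  | .ex x A => u ∉ (Fm.ex x A).ter ∨ (t ≠ Tm.var x ∧ A.freeFor t u)
  | _ => True

/-- Simultaneous substitution of terms for variables (used on atoms). -/
def Tm.applyσ (σ : ℕ → Tm) : Tm → Tm
  | .var x => σ x
  | .const c => .const c

def Fm.applyσ (σ : ℕ → Tm) : Fm → Fm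
  | .rel r ts => .rel r (ts.map (Tm.applyσ σ))
  | .eq a b => .eq (a.applyσ σ) (b.applyσ σ)
  | .bot => .bot
  | .top => .top
  | .and A B => .and (A.applyσ σ) (B.applyσ σ)
  | .or A B => .or (A.applyσ σ) (B.applyσ σ)
  | .imp A B => .imp (A.applyσ σ) (B.applyσ σ)
  | .all x A => .all x (A.applyσ σ)
  | .ex x A => .ex x (A.applyσ σ)

/-- A geometric rule, given by its principal atoms P₁,…,Pₙ (with free
variables x̄) and, for each of its m ≥ 1 premises, an atom Qᵢ together with
its eigenvariable yᵢ. It corresponds to the geometric axiom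
∀x̄(P₁∧…∧Pₙ → ∃y₁Q₁ ∨ … ∨ ∃yₘQₘ). -/
structure GeomRule where
  Ps : List Fm
  QYs : List (Fm × ℕ)
  QYs_ne : QYs ≠ []
  atomP : ∀ P ∈ Ps, P.isAtom
  atomQ : ∀ q ∈ QYs, q.1.isAtom

/-- Rel of a list of formulas. -/
def relsL (L : List Fm) : Finset ℕ := L.foldr (fun A s => A.rels ∪ s) ∅

/-- A singular geometric rule: no individual constants occur in it, and (⋆):
at most one non-logical predicate occurs among the Qᵢ's and Pⱼ's, and every
non-logical predicate of the Qᵢ's occurs among the Pⱼ's. -/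
def GeomRule.Singular (R : GeomRule) : Prop :=
  (∀ P ∈ R.Ps, P.consts = ∅) ∧ (∀ q ∈ R.QYs, q.1.consts = ∅) ∧
  (relsL R.Ps ∪ relsL (R.QYs.map Prod.fst)).card ≤ 1 ∧
  relsL (R.QYs.map Prod.fst) ⊆ relsL R.Ps

/-- The instantiated principal atoms P₁[σ],…,Pₙ[σ] of a geometric rule. -/
def GeomRule.inst (R : GeomRule) (σ : ℕ → Tm) : Multiset Fm :=
  ((R.Ps.map (Fm.applyσ σ) : List Fm) : Multiset Fm)

/-- `DerG Rules n Γ Δ`: the sequent Γ⇒Δ has a derivation of height at most n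
in the calculus G3c extended with the geometric rules in `Rules`
(the plain calculus G is `DerG ∅`). -/
inductive DerG (Rules : Set GeomRule) : ℕ → Multiset Fm → Multiset Fm → Prop where
  | ax {n : ℕ} {P : Fm} {Γ Δ : Multiset Fm} (h : P.isAtom) :
      DerG Rules n (P ::ₘ Γ) (P ::ₘ Δ)
  | botL {n : ℕ} {Γ Δ : Multiset Fm} : DerG Rules n (Fm.bot ::ₘ Γ) Δ
  | topR {n : ℕ} {Γ Δ : Multiset Fm} : DerG Rules n Γ (Fm.top ::ₘ Δ)
  | andL {n : ℕ} {A B : Fm} {Γ Δ : Multiset Fm} :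
      DerG Rules n (A ::ₘ B ::ₘ Γ) Δ → DerG Rules (n + 1) (Fm.and A B ::ₘ Γ) Δ
  | andR {n : ℕ} {A B : Fm} {Γ Δ : Multiset Fm} :
      DerG Rules n Γ (A ::ₘ Δ) → DerG Rules n Γ (B ::ₘ Δ) →
      DerG Rules (n + 1) Γ (Fm.and A B ::ₘ Δ)
  | orL {n : ℕ} {A B : Fm} {Γ Δ : Multiset Fm} :
      DerG Rules n (A ::ₘ Γ) Δ → DerG Rules n (B ::ₘ Γ) Δ →
      DerG Rules (n + 1) (Fm.or A B ::ₘ Γ) Δ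
  | orR {n : ℕ} {A B : Fm} {Γ Δ : Multiset Fm} :
      DerG Rules n Γ (A ::ₘ B ::ₘ Δ) → DerG Rules (n + 1) Γ (Fm.or A B ::ₘ Δ)
  | impL {n : ℕ} {A B : Fm} {Γ Δ : Multiset Fm} :
      DerG Rules n Γ (A ::ₘ Δ) → DerG Rules n (B ::ₘ Γ) Δ →
      DerG Rules (n + 1) (Fm.imp A B ::ₘ Γ) Δ
  | impR {n : ℕ} {A B : Fm} {Γ Δ : Multiset Fm} :
      DerG Rules n (A ::ₘ Γ) (B ::ₘ Δ) → DerG Rules (n + 1) Γ (Fm.imp A B ::ₘ Δ)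
  | allL {n : ℕ} {x : ℕ} {A : Fm} {t : Tm} {Γ Δ : Multiset Fm}
      (hfree : A.freeFor t (Tm.var x)) :
      DerG Rules n (A.subst (Tm.var x) t ::ₘ Fm.all x A ::ₘ Γ) Δ →
      DerG Rules (n + 1) (Fm.all x A ::ₘ Γ) Δ
  | allR {n : ℕ} {x y : ℕ} {A : Fm} {Γ Δ : Multiset Fm}
      (hfree : A.freeFor (Tm.var y) (Tm.var x))
      (hy : Tm.var y ∉ terM Γ ∪ terM Δ ∪ (Fm.all x A).ter) :
      DerG Rules n Γ (A.subst (Tm.var x) (Tm.var y) ::ₘ Δ) →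
      DerG Rules (n + 1) Γ (Fm.all x A ::ₘ Δ)
  | exL {n : ℕ} {x y : ℕ} {A : Fm} {Γ Δ : Multiset Fm}
      (hfree : A.freeFor (Tm.var y) (Tm.var x))
      (hy : Tm.var y ∉ terM Γ ∪ terM Δ ∪ (Fm.ex x A).ter) :
      DerG Rules n (A.subst (Tm.var x) (Tm.var y) ::ₘ Γ) Δ →
      DerG Rules (n + 1) (Fm.ex x A ::ₘ Γ) Δ
  | exR {n : ℕ} {x : ℕ} {A : Fm} {t : Tm} {Γ Δ : Multiset Fm}
      (hfree : A.freeFor t (Tm.var x)) :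
      DerG Rules n Γ (Fm.ex x A ::ₘ A.subst (Tm.var x) t ::ₘ Δ) →
      DerG Rules (n + 1) Γ (Fm.ex x A ::ₘ Δ)
  | geom {n : ℕ} {R : GeomRule} {σ : ℕ → Tm} {Γ Δ : Multiset Fm} (hR : R ∈ Rules)
      (hfresh : ∀ q ∈ R.QYs, ∃ z : ℕ, σ q.2 = Tm.var z ∧
          Tm.var z ∉ terM (R.inst σ + Γ) ∪ terM Δ)
      (hprem : ∀ q ∈ R.QYs, DerG Rules n (Fm.applyσ σ q.1 ::ₘ (R.inst σ + Γ)) Δ) :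
      DerG Rules (n + 1) (R.inst σ + Γ) Δ

/-- Γ⇒Δ is derivable in G + Rules. -/
def Derivable (Rules : Set GeomRule) (Γ Δ : Multiset Fm) : Prop :=
  ∃ n, DerG Rules n Γ Δ

/-- C is a split-interpolant of the partition Γ₁;Γ₂⇒Δ₁;Δ₂ in G + Rules. -/
def SplitInterpolant (Rules : Set GeomRule) (Γ₁ Γ₂ Δ₁ Δ₂ : Multiset Fm) (C : Fm) : Prop :=
  Derivable Rules Γ₁ (C ::ₘ Δ₁) ∧ Derivable Rules (C ::ₘ Γ₂) Δ₂ ∧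
  C.lang ⊆ langM (Γ₁ + Δ₁) ∩ langM (Γ₂ + Δ₂)
/-- Disjunction C₁ ∨ … ∨ Cₘ of a list of formulas. -/
def disj : List Fm → Fm
  | [] => Fm.bot
  | [C] => C
  | C :: L => Fm.or C (disj L)

/-- Conjunction C₁ ∧ … ∧ Cₘ of a list of formulas. -/
def conj : List Fm → Fm
  | [] => Fm.top
  | [C] => C
  | C :: L => Fm.and C (conj L)

/-- A[z̄/t̄]: successively substitute the variable zᵢ for the term tᵢ. -/
def Fm.substPairs : Fm → List (Tm × ℕ) → Fm
  | A, [] => A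
  | A, (t, z) :: L => (A.subst t (Tm.var z)).substPairs L

/-- ∀z̄ A. -/
def foralls (zs : List ℕ) (A : Fm) : Fm := zs.foldr Fm.all A

/-- ∃z̄ A. -/
def exs (zs : List ℕ) (A : Fm) : Fm := zs.foldr Fm.ex A
/-- `DerE Γ Δ`: the sequent Γ⇒Δ is derivable in G= , i.e. G3c extended with
the rules Ref and Repl for identity. -/
inductive DerE : Multiset Fm → Multiset Fm → Prop where
  | ax {P : Fm} {Γ Δ : Multiset Fm} (h : P.isAtom) : DerE (P ::ₘ Γ) (P ::ₘ Δ)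
  | botL {Γ Δ : Multiset Fm} : DerE (Fm.bot ::ₘ Γ) Δ
  | topR {Γ Δ : Multiset Fm} : DerE Γ (Fm.top ::ₘ Δ)
  | andL {A B : Fm} {Γ Δ : Multiset Fm} :
      DerE (A ::ₘ B ::ₘ Γ) Δ → DerE (Fm.and A B ::ₘ Γ) Δ
  | andR {A B : Fm} {Γ Δ : Multiset Fm} :
      DerE Γ (A ::ₘ Δ) → DerE Γ (B ::ₘ Δ) → DerE Γ (Fm.and A B ::ₘ Δ)
  | orL {A B : Fm} {Γ Δ : Multiset Fm} :
      DerE (A ::ₘ Γ) Δ → DerE (B ::ₘ Γ) Δ → DerE (Fm.or A B ::ₘ Γ) Δ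
  | orR {A B : Fm} {Γ Δ : Multiset Fm} :
      DerE Γ (A ::ₘ B ::ₘ Δ) → DerE Γ (Fm.or A B ::ₘ Δ)
  | impL {A B : Fm} {Γ Δ : Multiset Fm} :
      DerE Γ (A ::ₘ Δ) → DerE (B ::ₘ Γ) Δ → DerE (Fm.imp A B ::ₘ Γ) Δ
  | impR {A B : Fm} {Γ Δ : Multiset Fm} :
      DerE (A ::ₘ Γ) (B ::ₘ Δ) → DerE Γ (Fm.imp A B ::ₘ Δ)
  | allL {x : ℕ} {A : Fm} {t : Tm} {Γ Δ : Multiset Fm}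
      (hfree : A.freeFor t (Tm.var x)) :
      DerE (A.subst (Tm.var x) t ::ₘ Fm.all x A ::ₘ Γ) Δ → DerE (Fm.all x A ::ₘ Γ) Δ
  | allR {x y : ℕ} {A : Fm} {Γ Δ : Multiset Fm}
      (hfree : A.freeFor (Tm.var y) (Tm.var x))
      (hy : Tm.var y ∉ terM Γ ∪ terM Δ ∪ (Fm.all x A).ter) :
      DerE Γ (A.subst (Tm.var x) (Tm.var y) ::ₘ Δ) → DerE Γ (Fm.all x A ::ₘ Δ)
  | exL {x y : ℕ} {A : Fm} {Γ Δ : Multiset Fm}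
      (hfree : A.freeFor (Tm.var y) (Tm.var x))
      (hy : Tm.var y ∉ terM Γ ∪ terM Δ ∪ (Fm.ex x A).ter) :
      DerE (A.subst (Tm.var x) (Tm.var y) ::ₘ Γ) Δ → DerE (Fm.ex x A ::ₘ Γ) Δ
  | exR {x : ℕ} {A : Fm} {t : Tm} {Γ Δ : Multiset Fm}
      (hfree : A.freeFor t (Tm.var x)) :
      DerE Γ (Fm.ex x A ::ₘ A.subst (Tm.var x) t ::ₘ Δ) → DerE Γ (Fm.ex x A ::ₘ Δ)
  | refl {s : Tm} {Γ Δ : Multiset Fm} :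
      DerE (Fm.eq s s ::ₘ Γ) Δ → DerE Γ Δ
  | repl {P : Fm} {x : ℕ} {s t : Tm} {Γ Δ : Multiset Fm} (hP : P.isAtom) :
      DerE (P.subst (Tm.var x) t ::ₘ Fm.eq s t ::ₘ P.subst (Tm.var x) s ::ₘ Γ) Δ →
      DerE (Fm.eq s t ::ₘ P.subst (Tm.var x) s ::ₘ Γ) Δ

/-- C is a split-interpolant of the partition Γ₁;Γ₂⇒Δ₁;Δ₂ in G=. -/
def SplitInterpolantE (Γ₁ Γ₂ Δ₁ Δ₂ : Multiset Fm) (C : Fm) : Prop :=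
  DerE Γ₁ (C ::ₘ Δ₁) ∧ DerE (C ::ₘ Γ₂) Δ₂ ∧
  C.lang ⊆ langM (Γ₁ + Δ₁) ∩ langM (Γ₂ + Δ₂)

/-! Maehara's induction on the derivation, with every principal formula moved to the left half of
the partition by negating the interpolant. The rules L∀, R∃, Ref and Repl put terms into the
premise that need not occur in the conclusion, so an interpolant of the premise may contain a term
`t` missing from one half. Such a `t` is quantified away: `C` becomes `∀z C[z/t]` if `t` is missing
from the left half and, dually, `¬∀z ¬C[z/t]` if it is missing from the right one. This rests on the
admissibility of renaming, and on keeping `t` free for `z` in `C[z/t]`; for the latter the induction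
produces interpolants whose bound variables avoid any prescribed finite set. If Repl acts on `s = t`
in the left half and `P[s/x]` in the right one, the interpolant is `s = t ∧ C`, from which `s` and
`t` are then quantified away where necessary. -/

open Function (update)

/-! ### Simultaneous renaming of terms -/

namespace Tm

/-- The action of a renaming on the scope of a quantifier over the variable `x`: the variable `x`
is left alone there. -/
abbrev underBinder (f : Tm → Tm) (x : ℕ) : Tm → Tm := update f (var x) (var x)

/-- The renaming `f` moves no term into `S`. With `S` a set of bound variables, this is what keeps
`f` from causing variable capture. -/
def Avoids (f : Tm → Tm) (S : Finset Tm) : Prop := ∀ u, f u ∈ S → f u = u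

theorem exists_var_notMem (T : Finset Tm) : ∃ z, var z ∉ T := by
  have hinf : (Set.range var).Infinite := Set.infinite_range_of_injective fun _ _ => var.inj
  obtain ⟨_, ⟨z, rfl⟩, hz⟩ := hinf.exists_notMem_finset T
  exact ⟨z, hz⟩

theorem underBinder_id (x : ℕ) : underBinder id x = id := Function.update_eq_self (var x) id

theorem underBinder_update_id {u : Tm} {x : ℕ} (h : u ≠ var x) (t : Tm) :
    underBinder (update id u t) x = update id u t := by
  rw [underBinder, Function.update_comm h]
  exact congrArg (update · u t) (underBinder_id x)

theorem underBinder_congr {f g : Tm → Tm} {x : ℕ} {S : Finset Tm}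
    (h : ∀ u ∈ S.erase (var x), f u = g u) : ∀ u ∈ S, underBinder f x u = underBinder g x u := by
  intro u hu
  by_cases hux : u = var x
  · simp [hux]
  · simpa [hux] using h u (Finset.mem_erase.2 ⟨hux, hu⟩)

theorem underBinder_comp {f : Tm → Tm} {x : ℕ} {u : Tm} (h : u ≠ var x → f u ≠ var x)
    (g : Tm → Tm) : (underBinder g x ∘ underBinder f x) u = underBinder (g ∘ f) x u := by
  by_cases hux : u = var x
  · simp [hux]
  · simp [hux, h hux]

theorem avoids_id (S : Finset Tm) : Avoids id S := fun _ _ => rfl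

namespace Avoids

variable {f : Tm → Tm} {S T : Finset Tm}

theorem mono (h : Avoids f T) (hST : S ⊆ T) : Avoids f S := fun u hu => h u (hST hu)

theorem update (h : Avoids f S) (u : Tm) {t : Tm} (ht : t ∉ S) : Avoids (update f u t) S := by
  intro v hv
  by_cases hvu : v = u
  · subst hvu
    exact absurd (by simpa using hv) ht
  · simpa [hvu] using h v (by simpa [hvu] using hv)

theorem underBinder (h : Avoids f S) (x : ℕ) : Avoids (underBinder f x) S := by
  intro u hu
  by_cases hux : u = var x
  · simp [hux]
  · simpa [hux] using h u (by simpa [hux] using hu)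

theorem update_id_comp_underBinder {x : ℕ} (h : Avoids f S) (hx : var x ∈ S) (t : Tm) :
    Function.update id (var x) (f t) ∘ Tm.underBinder f x =
      f ∘ Function.update id (var x) t := by
  funext u
  by_cases hux : u = var x
  · simp [hux]
  · have hfu : f u ≠ var x := fun e => hux ((h u (e ▸ hx)).symm.trans e)
    simp [hux, hfu]

end Avoids

end Tm

namespace Fm

open Tm (underBinder Avoids)

/-- The variables bound by a quantifier in a formula, as terms (like `Fm.ter`). -/
def boundVars : Fm → Finset Tm
  | .rel _ _ | .eq _ _ | .bot | .top => ∅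
  | .and A B | .or A B | .imp A B => A.boundVars ∪ B.boundVars
  | .all x A | .ex x A => insert (.var x) A.boundVars

/-- Simultaneous replacement of the free variables and constants `u` of a formula by `f u`.
Nothing prevents capture here, see `Fm.CaptureFree`. -/
def rename : Fm → (Tm → Tm) → Fm
  | .rel r ts, f => .rel r (ts.map f)
  | .eq a b, f => .eq (f a) (f b)
  | .bot, _ => .bot
  | .top, _ => .top
  | .and A B, f => .and (A.rename f) (B.rename f)
  | .or A B, f => .or (A.rename f) (B.rename f)
  | .imp A B, f => .imp (A.rename f) (B.rename f)
  | .all x A, f => .all x (A.rename (underBinder f x))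
  | .ex x A, f => .ex x (A.rename (underBinder f x))

/-- No term that `f` puts in place of a free term of the formula gets bound; this generalizes
`Fm.freeFor` to simultaneous renamings. -/
def CaptureFree : Fm → (Tm → Tm) → Prop
  | .and A B, f | .or A B, f | .imp A B, f => A.CaptureFree f ∧ B.CaptureFree f
  | .all x A, f | .ex x A, f =>
      (∀ u ∈ A.ter, u ≠ .var x → f u ≠ .var x) ∧ A.CaptureFree (underBinder f x)
  | _, _ => True

variable {A P : Fm} {f g : Tm → Tm} {t u : Tm} {x y z : ℕ}

theorem rename_congr (h : ∀ u ∈ A.ter, f u = g u) : A.rename f = A.rename g := by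
  induction A generalizing f g with
  | rel r ts => simpa [rename, ter] using h
  | eq a b => simpa [rename, ter] using h
  | bot | top => rfl
  | and A B ihA ihB | or A B ihA ihB | imp A B ihA ihB =>
    simp only [ter, Finset.mem_union] at h
    simp only [rename]
    rw [ihA fun u hu => h u (.inl hu), ihB fun u hu => h u (.inr hu)]
  | all x A ih | ex x A ih =>
    simp only [rename]
    rw [ih (Tm.underBinder_congr h)]

theorem rename_id (A : Fm) : A.rename id = A := by
  induction A with
  | rel | eq | bot | top => simp [rename]
  | and A B ihA ihB | or A B ihA ihB | imp A B ihA ihB => simp only [rename, ihA, ihB]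
  | all x A ih | ex x A ih => simp only [rename, Tm.underBinder_id, ih]

theorem subst_eq_rename (A : Fm) (u t : Tm) : A.subst u t = A.rename (update id u t) := by
  have hTm (s : Tm) : s.subst u t = update id u t s := by
    simp [Tm.subst, Function.update_apply]
  induction A with
  | rel | eq | bot | top => simp [rename, subst, hTm]
  | and A B ihA ihB | or A B ihA ihB | imp A B ihA ihB => simp only [rename, subst, ihA, ihB]
  | all x A ih | ex x A ih =>
    by_cases hu : u = .var x
    · simp only [rename, subst, hu, if_true, underBinder, Function.update_idem]
      rw [← underBinder, Tm.underBinder_id, rename_id]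
    · simp only [rename, subst, hu, if_false, ih, Tm.underBinder_update_id hu]

theorem rename_update_of_notMem (hu : u ∉ A.ter) : A.rename (update f u t) = A.rename f :=
  rename_congr fun _ hv => Function.update_of_ne (ne_of_mem_of_not_mem hv hu) ..

theorem subst_self (A : Fm) (u : Tm) : A.subst u u = A := by
  rw [subst_eq_rename, show update id u u = id from Function.update_eq_self u id, rename_id]

theorem ter_rename_subset (A : Fm) (f : Tm → Tm) : (A.rename f).ter ⊆ A.ter.image f := by
  induction A generalizing f with
  | rel | eq | bot | top => intro u; simp [rename, ter, eq_comm]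
  | and A B ihA ihB | or A B ihA ihB | imp A B ihA ihB =>
    simp only [rename, ter, Finset.image_union]
    exact Finset.union_subset_union (ihA f) (ihB f)
  | all x A ih | ex x A ih =>
    intro u hu
    obtain ⟨hux, hu⟩ := Finset.mem_erase.1 hu
    obtain ⟨v, hv, rfl⟩ := Finset.mem_image.1 (ih _ hu)
    have hvx : v ≠ .var x := by
      rintro rfl
      simp at hux
    exact Finset.mem_image.2 ⟨v, Finset.mem_erase.2 ⟨hvx, hv⟩, by simp [hvx]⟩

@[simp]
theorem rels_rename (A : Fm) (f : Tm → Tm) : (A.rename f).rels = A.rels := by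
  induction A generalizing f <;> simp_all [rename, rels]

@[simp]
theorem boundVars_rename (A : Fm) (f : Tm → Tm) : (A.rename f).boundVars = A.boundVars := by
  induction A generalizing f <;> simp_all [rename, boundVars]

@[simp]
theorem boundVars_subst (A : Fm) (u t : Tm) : (A.subst u t).boundVars = A.boundVars := by
  rw [subst_eq_rename, boundVars_rename]

theorem isAtom.rename (h : P.isAtom) (f : Tm → Tm) : (P.rename f).isAtom := by
  cases P <;> trivial

theorem isAtom.captureFree (h : P.isAtom) (f : Tm → Tm) : P.CaptureFree f := by
  cases P <;> trivial

theorem isAtom.boundVars_eq_empty (h : P.isAtom) : P.boundVars = ∅ := by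
  cases P <;> trivial

theorem CaptureFree.congr (hf : A.CaptureFree f) (h : ∀ u ∈ A.ter, f u = g u) :
    A.CaptureFree g := by
  induction A generalizing f g with
  | rel | eq | bot | top => trivial
  | and A B ihA ihB | or A B ihA ihB | imp A B ihA ihB =>
    simp only [ter, Finset.mem_union] at h
    exact ⟨ihA hf.1 fun u hu => h u (.inl hu), ihB hf.2 fun u hu => h u (.inr hu)⟩
  | all x A ih | ex x A ih =>
    refine ⟨fun u hu hux => ?_, ih hf.2 (Tm.underBinder_congr h)⟩
    rw [← h u (Finset.mem_erase.2 ⟨hux, hu⟩)]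
    exact hf.1 u hu hux

theorem captureFree_id (A : Fm) : A.CaptureFree id := by
  induction A with
  | rel | eq | bot | top => trivial
  | and A B ihA ihB | or A B ihA ihB | imp A B ihA ihB => exact ⟨ihA, ihB⟩
  | all x A ih | ex x A ih => exact ⟨fun _ _ hux => hux, by rwa [Tm.underBinder_id]⟩

theorem CaptureFree.comp_of_avoids (hf : A.CaptureFree f) (hg : Avoids g A.boundVars) :
    A.CaptureFree (g ∘ f) := by
  induction A generalizing f g with
  | rel | eq | bot | top => trivial
  | and A B ihA ihB | or A B ihA ihB | imp A B ihA ihB =>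
    exact ⟨ihA hf.1 (hg.mono Finset.subset_union_left),
      ihB hf.2 (hg.mono Finset.subset_union_right)⟩
  | all x A ih | ex x A ih =>
    refine ⟨fun u hu hux (hgfu : g (f u) = .var x) => hf.1 u hu hux ?_, (ih hf.2 ?_).congr
      fun u hu => Tm.underBinder_comp (hf.1 u hu) g⟩
    · exact (hg (f u) (hgfu ▸ Finset.mem_insert_self _ _)).symm.trans hgfu
    · exact (hg.mono (Finset.subset_insert _ _)).underBinder x

theorem captureFree_of_avoids (hf : Avoids f A.boundVars) : A.CaptureFree f :=
  A.captureFree_id.comp_of_avoids hf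

theorem rename_rename (hf : A.CaptureFree f) (g : Tm → Tm) :
    (A.rename f).rename g = A.rename (g ∘ f) := by
  induction A generalizing f g with
  | rel | eq | bot | top => simp [rename]
  | and A B ihA ihB | or A B ihA ihB | imp A B ihA ihB =>
    simp only [rename, ihA hf.1, ihB hf.2]
  | all x A ih | ex x A ih =>
    simp only [rename, ih hf.2]
    rw [rename_congr fun u hu => Tm.underBinder_comp (hf.1 u hu) g]

theorem CaptureFree.rename (hf : A.CaptureFree f) (hgf : A.CaptureFree (g ∘ f)) :
    (A.rename f).CaptureFree g := by
  induction A generalizing f g with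
  | rel | eq | bot | top => trivial
  | and A B ihA ihB | or A B ihA ihB | imp A B ihA ihB =>
    exact ⟨ihA hf.1 hgf.1, ihB hf.2 hgf.2⟩
  | all x A ih | ex x A ih =>
    refine ⟨fun u hu hux => ?_, ih hf.2 (hgf.2.congr fun u hu =>
      (Tm.underBinder_comp (hf.1 u hu) g).symm)⟩
    obtain ⟨v, hv, rfl⟩ := Finset.mem_image.1 (ter_rename_subset _ _ hu)
    have hvx : v ≠ .var x := by
      rintro rfl
      simp at hux
    simpa [hvx] using hgf.1 v hv hvx

theorem freeFor_iff_captureFree : A.freeFor t u ↔ A.CaptureFree (update id u t) := by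
  induction A with
  | rel | eq | bot | top => exact Iff.rfl
  | and A B ihA ihB | or A B ihA ihB | imp A B ihA ihB => exact and_congr ihA ihB
  | all x A ih | ex x A ih =>
    by_cases hux : u = .var x
    · simp +contextual [freeFor, ter, hux, CaptureFree, captureFree_id, Tm.underBinder_id]
    · have hvacuous : u ∉ A.ter → A.freeFor t u := fun hu =>
        ih.2 (A.captureFree_id.congr fun v hv =>
          (Function.update_of_ne (ne_of_mem_of_not_mem hv hu) ..).symm)
      have hbinder : (∀ v ∈ A.ter, v ≠ .var x → update id u t v ≠ .var x) ↔
          (u ∈ A.ter → t ≠ .var x) := by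
        grind [Function.update_apply]
      simp only [CaptureFree, Tm.underBinder_update_id hux, ← ih, hbinder, freeFor, ter,
        Finset.mem_erase]
      tauto

theorem freeFor_of_notMem_boundVars (ht : t ∉ A.boundVars) : A.freeFor t u :=
  freeFor_iff_captureFree.2 (captureFree_of_avoids ((Tm.avoids_id _).update u ht))

theorem rename_subst (hf : Avoids f (insert (.var x) A.boundVars)) (ht : A.freeFor t (.var x)) :
    (A.subst (.var x) t).rename f = (A.rename (underBinder f x)).subst (.var x) (f t) := by
  have hfx : A.CaptureFree (underBinder f x) :=
    captureFree_of_avoids ((hf.mono (Finset.subset_insert _ _)).underBinder x)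
  rw [subst_eq_rename, subst_eq_rename, rename_rename (freeFor_iff_captureFree.1 ht),
    rename_rename hfx, hf.update_id_comp_underBinder (Finset.mem_insert_self _ _)]

theorem freeFor.rename (ht : A.freeFor t (.var x)) (hf : Avoids f (insert (.var x) A.boundVars)) :
    (A.rename (underBinder f x)).freeFor (f t) (.var x) := by
  have hfA : Avoids f A.boundVars := hf.mono (Finset.subset_insert _ _)
  rw [freeFor_iff_captureFree] at ht ⊢
  refine (captureFree_of_avoids (hfA.underBinder x)).rename ?_
  rw [hf.update_id_comp_underBinder (Finset.mem_insert_self _ _)]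
  exact ht.comp_of_avoids hfA

theorem rename_subst_eigenvariable (hf : Avoids f (insert (.var x) A.boundVars))
    (ht : t ∉ insert (.var x) A.boundVars) (hy : .var y ∉ (Fm.all x A).ter)
    (hyx : A.freeFor (.var y) (.var x)) :
    (A.subst (.var x) (.var y)).rename (update f (.var y) t) =
      (A.rename (underBinder f x)).subst (.var x) t := by
  have hbody : A.rename (underBinder (update f (.var y) t) x) = A.rename (underBinder f x) :=
    (Fm.all.inj (rename_update_of_notMem (A := .all x A) hy)).2
  rw [rename_subst (hf.update _ ht) hyx, hbody, Function.update_self]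

theorem isAtom.exists_rename_subst (hP : P.isAtom) (f : Tm → Tm) (x : ℕ) :
    ∃ (Q : Fm) (z : ℕ), Q.isAtom ∧ ∀ s, (P.subst (.var x) s).rename f = Q.subst (.var z) (f s) := by
  obtain ⟨z, hz⟩ := Tm.exists_var_notMem (P.ter.image f)
  refine ⟨P.rename (update f (.var x) (.var z)), z, hP.rename _, fun s => ?_⟩
  rw [subst_eq_rename, subst_eq_rename, rename_rename (hP.captureFree _),
    rename_rename (hP.captureFree _)]
  refine rename_congr fun u hu => ?_
  by_cases hux : u = .var x
  · simp [hux]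
  · have hfu : f u ≠ .var z := ne_of_mem_of_not_mem (Finset.mem_image_of_mem f hu) hz
    simp [hux, hfu]

theorem subst_subst_cancel (hz : .var z ∉ A.boundVars) (hz' : .var z ∉ A.ter) :
    (A.subst t (.var z)).subst (.var z) t = A := by
  have hzt : A.CaptureFree (update id t (.var z)) :=
    captureFree_of_avoids ((Tm.avoids_id _).update t hz)
  rw [subst_eq_rename, subst_eq_rename, rename_rename hzt]
  refine (rename_congr fun u hu => ?_).trans A.rename_id
  have huz : u ≠ .var z := ne_of_mem_of_not_mem hu hz'
  by_cases hut : u = t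
  · simp [hut]
  · simp [hut, huz]

end Fm

/-! ### Terms, bound variables and languages of multisets -/

/-- The bound variables of the formulas of a multiset. -/
def boundVarsM (Γ : Multiset Fm) : Finset Tm := (Γ.map Fm.boundVars).sup

section Lang

variable {A B P : Fm} {Γ Δ : Multiset Fm} {s t u : Tm} {x : ℕ} {f : Tm → Tm}

@[simp]
theorem boundVarsM_cons : boundVarsM (A ::ₘ Γ) = A.boundVars ∪ boundVarsM Γ := by
  simp [boundVarsM]

@[simp]
theorem langM_zero : langM 0 = ∅ := rfl

@[simp]
theorem langM_cons : langM (A ::ₘ Γ) = A.lang ∪ langM Γ := by simp [langM]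

@[simp]
theorem langM_add : langM (Γ + Δ) = langM Γ ∪ langM Δ := by simp [langM]

@[simp]
theorem terM_cons : terM (A ::ₘ Γ) = A.ter ∪ terM Γ := by simp [terM]

@[simp]
theorem terM_add : terM (Γ + Δ) = terM Γ ∪ terM Δ := by simp [terM]

namespace Fm

@[simp]
theorem inl_mem_lang : .inl u ∈ A.lang ↔ u ∈ A.ter := by simp [lang]

@[simp]
theorem inr_mem_lang {r : ℕ} : .inr r ∈ A.lang ↔ r ∈ A.rels := by simp [lang]

@[simp]
theorem lang_eq : (Fm.eq s t).lang = {.inl s, .inl t} := by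
  ext (_ | _) <;> simp [ter, rels]

@[simp]
theorem lang_bot : Fm.bot.lang = ∅ := rfl

@[simp]
theorem lang_and : (Fm.and A B).lang = A.lang ∪ B.lang := by
  ext (_ | _) <;> simp [ter, rels]

@[simp]
theorem lang_or : (Fm.or A B).lang = A.lang ∪ B.lang := by
  ext (_ | _) <;> simp [ter, rels]

@[simp]
theorem lang_imp : (Fm.imp A B).lang = A.lang ∪ B.lang := by
  ext (_ | _) <;> simp [ter, rels]

@[simp]
theorem lang_all : (Fm.all x A).lang = A.lang.erase (.inl (.var x)) := by
  ext (_ | _) <;> simp [ter, rels]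

@[simp]
theorem lang_ex : (Fm.ex x A).lang = A.lang.erase (.inl (.var x)) := by
  ext (_ | _) <;> simp [ter, rels]

theorem lang_subst_subset (A : Fm) (u t : Tm) :
    (A.subst u t).lang ⊆ insert (.inl t) (A.lang.erase (.inl u)) := by
  rintro (v | r) h
  · rw [inl_mem_lang, subst_eq_rename] at h
    obtain ⟨w, hw, rfl⟩ := Finset.mem_image.1 (ter_rename_subset _ _ h)
    by_cases hwu : w = u <;> simp [hwu, hw]
  · simpa [subst_eq_rename] using h

theorem lang_all_subst_subset (A : Fm) (t : Tm) (z : ℕ) :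
    (Fm.all z (A.subst t (.var z))).lang ⊆ A.lang.erase (.inl t) := by
  rw [lang_all]
  exact (Finset.erase_subset_erase _ (A.lang_subst_subset t (.var z))).trans
    (Finset.erase_insert_subset _ _)

theorem isAtom.lang_erase_subset_lang_subst (hP : P.isAtom) (u s : Tm) :
    P.lang.erase (.inl u) ⊆ (P.subst u s).lang := by
  rintro (v | r) h
  · have hvu : v ≠ u := by simpa using (Finset.mem_erase.1 h).1
    have hv : v ∈ P.ter := by simpa using (Finset.mem_erase.1 h).2
    rw [inl_mem_lang]
    cases P with
    | rel r ts =>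
      rw [subst, ter, List.mem_toFinset, List.mem_map]
      exact ⟨v, List.mem_toFinset.1 hv, if_neg hvu⟩
    | eq a b => simp only [subst, ter, Tm.subst] at hv ⊢; grind
    | bot | top => simp [ter] at hv
    | _ => exact hP.elim
  · simpa [subst_eq_rename] using h

theorem isAtom.lang_subst_subset_lang_subst (hP : P.isAtom) (u s t : Tm) :
    (P.subst u t).lang ⊆ insert (.inl t) (P.subst u s).lang :=
  (P.lang_subst_subset u t).trans
    (Finset.insert_subset_insert _ (hP.lang_erase_subset_lang_subst u s))

end Fm

@[simp]
theorem inl_mem_langM : .inl u ∈ langM Γ ↔ u ∈ terM Γ := by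
  induction Γ using Multiset.induction with
  | empty => simp [terM]
  | cons A Γ ih => simp [ih]

theorem map_rename_update_of_notMem (hu : u ∉ terM Γ) :
    Γ.map (·.rename (update f u t)) = Γ.map (·.rename f) := by
  refine Multiset.map_congr rfl fun A hA => Fm.rename_update_of_notMem fun huA => hu ?_
  have hAΓ : A.ter ≤ terM Γ := Multiset.le_sup (Multiset.mem_map_of_mem _ hA)
  exact hAΓ huA

end Lang

/-! ### Admissibility of renaming and weakening -/

/-- Every weakening of every renaming of the sequent `Γ ⇒ Δ` into terms not bound in it is
derivable. Renaming and weakening are treated together because both force the eigenvariables of a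
derivation to be changed. -/
def RenamingStable (Γ Δ : Multiset Fm) : Prop :=
  ∀ f : Tm → Tm, Tm.Avoids f (boundVarsM Γ ∪ boundVarsM Δ) → ∀ Γ' Δ',
    DerE (Γ.map (·.rename f) + Γ') (Δ.map (·.rename f) + Δ')

namespace RenamingStable

variable {A P : Fm} {Γ Δ : Multiset Fm} {s t : Tm} {x y : ℕ}

theorem allL (ht : A.freeFor t (.var x))
    (h : RenamingStable (A.subst (.var x) t ::ₘ .all x A ::ₘ Γ) Δ) :
    RenamingStable (.all x A ::ₘ Γ) Δ := by
  intro f hf Γ' Δ'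
  have hfA : Tm.Avoids f (insert (.var x) A.boundVars) :=
    hf.mono (by grind [boundVarsM_cons, Fm.boundVars, Fm.boundVars_subst])
  have hprem := h f (hf.mono (by grind [boundVarsM_cons, Fm.boundVars, Fm.boundVars_subst])) Γ' Δ'
  simp only [Multiset.map_cons, Multiset.cons_add, Fm.rename_subst hfA ht, Fm.rename] at hprem ⊢
  exact .allL (ht.rename hfA) hprem

theorem exR (ht : A.freeFor t (.var x))
    (h : RenamingStable Γ (.ex x A ::ₘ A.subst (.var x) t ::ₘ Δ)) :
    RenamingStable Γ (.ex x A ::ₘ Δ) := by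
  intro f hf Γ' Δ'
  have hfA : Tm.Avoids f (insert (.var x) A.boundVars) :=
    hf.mono (by grind [boundVarsM_cons, Fm.boundVars, Fm.boundVars_subst])
  have hprem := h f (hf.mono (by grind [boundVarsM_cons, Fm.boundVars, Fm.boundVars_subst])) Γ' Δ'
  simp only [Multiset.map_cons, Multiset.cons_add, Fm.rename_subst hfA ht, Fm.rename] at hprem ⊢
  exact .exR (ht.rename hfA) hprem

theorem allR (hyx : A.freeFor (.var y) (.var x))
    (hy : .var y ∉ terM Γ ∪ terM Δ ∪ (Fm.all x A).ter)
    (h : RenamingStable Γ (A.subst (.var x) (.var y) ::ₘ Δ)) :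
    RenamingStable Γ (.all x A ::ₘ Δ) := by
  intro f hf Γ' Δ'
  set B := A.rename (Tm.underBinder f x)
  obtain ⟨z, hz⟩ := Tm.exists_var_notMem
    (boundVarsM Γ ∪ boundVarsM (.all x A ::ₘ Δ) ∪ (terM (Γ.map (·.rename f) + Γ') ∪
      terM (Δ.map (·.rename f) + Δ') ∪ (Fm.all x B).ter))
  obtain ⟨hz, hzB⟩ := Finset.notMem_union.1 hz
  have hfA : Tm.Avoids f (insert (.var x) A.boundVars) :=
    hf.mono (by grind [boundVarsM_cons, Fm.boundVars])
  have hzA : .var z ∉ insert (.var x) A.boundVars := by grind [boundVarsM_cons, Fm.boundVars]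
  have hzx : B.freeFor (.var z) (.var x) :=
    Fm.freeFor_of_notMem_boundVars (by rw [Fm.boundVars_rename]; grind)
  have hprem := h (update f (.var y) (.var z)) ((hf.update _ hz).mono
    (by grind [boundVarsM_cons, Fm.boundVars, Fm.boundVars_subst])) Γ' Δ'
  simp only [Finset.notMem_union] at hy
  rw [Multiset.map_cons, map_rename_update_of_notMem hy.1.1, map_rename_update_of_notMem hy.1.2,
    Fm.rename_subst_eigenvariable hfA hzA hy.2 hyx, Multiset.cons_add] at hprem
  rw [Multiset.map_cons, Multiset.cons_add]
  exact .allR hzx hzB hprem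

theorem exL (hyx : A.freeFor (.var y) (.var x))
    (hy : .var y ∉ terM Γ ∪ terM Δ ∪ (Fm.ex x A).ter)
    (h : RenamingStable (A.subst (.var x) (.var y) ::ₘ Γ) Δ) :
    RenamingStable (.ex x A ::ₘ Γ) Δ := by
  intro f hf Γ' Δ'
  set B := A.rename (Tm.underBinder f x)
  obtain ⟨z, hz⟩ := Tm.exists_var_notMem
    (boundVarsM (.ex x A ::ₘ Γ) ∪ boundVarsM Δ ∪ (terM (Γ.map (·.rename f) + Γ') ∪
      terM (Δ.map (·.rename f) + Δ') ∪ (Fm.ex x B).ter))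
  obtain ⟨hz, hzB⟩ := Finset.notMem_union.1 hz
  have hfA : Tm.Avoids f (insert (.var x) A.boundVars) :=
    hf.mono (by grind [boundVarsM_cons, Fm.boundVars])
  have hzA : .var z ∉ insert (.var x) A.boundVars := by grind [boundVarsM_cons, Fm.boundVars]
  have hzx : B.freeFor (.var z) (.var x) :=
    Fm.freeFor_of_notMem_boundVars (by rw [Fm.boundVars_rename]; grind)
  have hprem := h (update f (.var y) (.var z)) ((hf.update _ hz).mono
    (by grind [boundVarsM_cons, Fm.boundVars, Fm.boundVars_subst])) Γ' Δ'
  simp only [Finset.notMem_union] at hy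
  rw [Multiset.map_cons, map_rename_update_of_notMem hy.1.1, map_rename_update_of_notMem hy.1.2,
    Fm.rename_subst_eigenvariable hfA hzA hy.2 hyx, Multiset.cons_add] at hprem
  rw [Multiset.map_cons, Multiset.cons_add]
  exact .exL hzx hzB hprem

theorem repl (hP : P.isAtom)
    (h : RenamingStable (P.subst (.var x) t ::ₘ .eq s t ::ₘ P.subst (.var x) s ::ₘ Γ) Δ) :
    RenamingStable (.eq s t ::ₘ P.subst (.var x) s ::ₘ Γ) Δ := by
  intro f hf Γ' Δ'
  obtain ⟨Q, z, hQ, hPQ⟩ := hP.exists_rename_subst f x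
  have hprem := h f (hf.mono (by simp [hP.boundVars_eq_empty, Fm.boundVars])) Γ' Δ'
  simp only [Multiset.map_cons, Multiset.cons_add, hPQ, Fm.rename] at hprem ⊢
  exact .repl hQ hprem

end RenamingStable

namespace DerE

variable {C : Fm} {Γ Δ : Multiset Fm} {t : Tm} {z : ℕ}

theorem renamingStable (h : DerE Γ Δ) : RenamingStable Γ Δ := by
  induction h with
  | allL ht _ ih => exact ih.allL ht
  | allR hyx hy _ ih => exact ih.allR hyx hy
  | exL hyx hy _ ih => exact ih.exL hyx hy
  | exR ht _ ih => exact ih.exR ht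
  | repl hP _ ih => exact ih.repl hP
  | ax hP => exact fun f _ _ _ => by simpa using .ax (hP.rename f)
  | botL => exact fun _ _ _ _ => by simpa [Fm.rename] using .botL
  | topR => exact fun _ _ _ _ => by simpa [Fm.rename] using .topR
  | andL _ ih | orR _ ih | impR _ ih =>
    intro f hf Γ' Δ'
    have hprem := ih f (hf.mono (by grind [boundVarsM_cons, Fm.boundVars])) Γ' Δ'
    simp only [Multiset.map_cons, Multiset.cons_add] at hprem ⊢
    first | exact .andL hprem | exact .orR hprem | exact .impR hprem
  | andR _ _ ihA ihB | orL _ _ ihA ihB | impL _ _ ihA ihB =>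
    intro f hf Γ' Δ'
    have hpremA := ihA f
      (hf.mono (by grind [boundVarsM_cons, Fm.boundVars])) Γ' Δ'
    have hpremB := ihB f
      (hf.mono (by grind [boundVarsM_cons, Fm.boundVars])) Γ' Δ'
    simp only [Multiset.map_cons, Multiset.cons_add] at hpremA hpremB ⊢
    first | exact .andR hpremA hpremB | exact .orL hpremA hpremB | exact .impL hpremA hpremB
  | refl _ ih =>
    intro f hf Γ' Δ'
    have hprem := ih f (hf.mono (by grind [boundVarsM_cons, Fm.boundVars])) Γ' Δ'
    rw [Multiset.map_cons, Multiset.cons_add] at hprem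
    exact .refl hprem

theorem weakenL (h : DerE Γ Δ) (A : Fm) : DerE (A ::ₘ Γ) Δ := by
  simpa [Fm.rename_id, ← Multiset.singleton_add, add_comm]
    using h.renamingStable id (Tm.avoids_id _) {A} 0

theorem weakenR (h : DerE Γ Δ) (A : Fm) : DerE Γ (A ::ₘ Δ) := by
  simpa [Fm.rename_id, ← Multiset.singleton_add, add_comm]
    using h.renamingStable id (Tm.avoids_id _) 0 {A}

theorem generalizeR (h : DerE Γ (C ::ₘ Δ)) (htΓ : t ∉ terM Γ) (htΔ : t ∉ terM Δ)
    (hz : .var z ∉ terM Γ ∪ terM Δ) (hz' : .var z ∉ boundVarsM Γ ∪ boundVarsM (C ::ₘ Δ)) :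
    DerE Γ (.all z (C.subst t (.var z)) ::ₘ Δ) := by
  have hzC : (C.subst t (.var z)).freeFor (.var z) (.var z) :=
    Fm.freeFor_of_notMem_boundVars (by grind [boundVarsM_cons, Fm.boundVars_subst])
  refine .allR hzC (Finset.notMem_union.2 ⟨hz, Finset.notMem_erase _ _⟩) ?_
  rw [Fm.subst_self]
  have hrename := h.renamingStable (update id t (.var z)) ((Tm.avoids_id _).update t hz') 0 0
  simpa only [add_zero, Multiset.map_cons, map_rename_update_of_notMem htΓ,
    map_rename_update_of_notMem htΔ, Fm.rename_id, Multiset.map_id', Fm.subst_eq_rename]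
    using hrename

theorem instantiateL (h : DerE (C ::ₘ Γ) Δ) (ht : t ∉ C.boundVars) (hz : .var z ∉ C.boundVars)
    (hz' : .var z ∉ C.ter) : DerE (.all z (C.subst t (.var z)) ::ₘ Γ) Δ := by
  refine .allL (t := t) (Fm.freeFor_of_notMem_boundVars (by rwa [Fm.boundVars_subst])) ?_
  rw [Fm.subst_subst_cancel hz hz', Multiset.cons_swap]
  exact h.weakenL _

end DerE

/-! ### Interpolants with prescribed bound variables -/

/-- The partition has a split-interpolant in which no variable of `S` is bound. -/
def HasInterpolant (S : Finset Tm) (Γ₁ Γ₂ Δ₁ Δ₂ : Multiset Fm) : Prop :=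
  ∃ C, SplitInterpolantE Γ₁ Γ₂ Δ₁ Δ₂ C ∧ Disjoint C.boundVars S

namespace HasInterpolant

variable {P : Fm} {Γ₁ Γ₁' Γ₁'' Γ₂ Δ₁ Δ₁' Δ₁'' Δ₂ : Multiset Fm} {S : Finset Tm} {s t : Tm} {x : ℕ}

theorem of_left (h : DerE Γ₁ Δ₁) : HasInterpolant S Γ₁ Γ₂ Δ₁ Δ₂ :=
  ⟨.bot, ⟨h.weakenR .bot, .botL, by simp⟩, by simp [Fm.boundVars]⟩

theorem symm (h : HasInterpolant S Γ₁ Γ₂ Δ₁ Δ₂) : HasInterpolant S Γ₂ Γ₁ Δ₂ Δ₁ := by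
  obtain ⟨C, ⟨hleft, hright, hlang⟩, hS⟩ := h
  refine ⟨.imp C .bot, ⟨.impR ?_, .impL hleft .botL, ?_⟩, by simpa [Fm.boundVars] using hS⟩
  · exact hright.weakenR .bot
  · rw [Finset.inter_comm]
    simpa using hlang

theorem weaken_left (h : HasInterpolant S Γ₁ Γ₂ Δ₁ Δ₂) (A : Fm) :
    HasInterpolant S (A ::ₘ Γ₁) Γ₂ Δ₁ Δ₂ := by
  obtain ⟨C, ⟨hleft, hright, hlang⟩, hS⟩ := h
  exact ⟨C, ⟨hleft.weakenL A, hright, hlang.trans (by grind [langM_cons, langM_add])⟩, hS⟩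

theorem weaken_right (h : HasInterpolant S Γ₁ Γ₂ Δ₁ Δ₂) (A : Fm) :
    HasInterpolant S Γ₁ (A ::ₘ Γ₂) Δ₁ Δ₂ :=
  (h.symm.weaken_left A).symm

theorem map_left (h : HasInterpolant S Γ₁ Γ₂ Δ₁ Δ₂)
    (hlang : langM (Γ₁ + Δ₁) ∩ langM (Γ₂ + Δ₂) ⊆ langM (Γ₁' + Δ₁'))
    (hrule : ∀ Θ, langM Θ ⊆ langM (Γ₂ + Δ₂) → DerE Γ₁ (Θ + Δ₁) → DerE Γ₁' (Θ + Δ₁')) :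
    HasInterpolant S Γ₁' Γ₂ Δ₁' Δ₂ := by
  obtain ⟨C, ⟨hleft, hright, hC⟩, hS⟩ := h
  have hCright : C.lang ⊆ langM (Γ₂ + Δ₂) := hC.trans Finset.inter_subset_right
  refine ⟨C, ⟨?_, hright, Finset.subset_inter (hC.trans hlang) hCright⟩, hS⟩
  simpa using hrule {C} (by simpa [← Multiset.cons_zero] using hCright) (by simpa using hleft)

theorem map₂_left (h : HasInterpolant S Γ₁ Γ₂ Δ₁ Δ₂) (h' : HasInterpolant S Γ₁' Γ₂ Δ₁' Δ₂)
    (hlang : langM (Γ₁ + Δ₁) ∪ langM (Γ₁' + Δ₁') ⊆ langM (Γ₁'' + Δ₁''))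
    (hrule : ∀ Θ, DerE Γ₁ (Θ + Δ₁) → DerE Γ₁' (Θ + Δ₁') → DerE Γ₁'' (Θ + Δ₁'')) :
    HasInterpolant S Γ₁'' Γ₂ Δ₁'' Δ₂ := by
  obtain ⟨C, ⟨hleftC, hrightC, hC⟩, hSC⟩ := h
  obtain ⟨D, ⟨hleftD, hrightD, hD⟩, hSD⟩ := h'
  refine ⟨.or C D, ⟨.orR ?_, .orL hrightC hrightD, ?_⟩, ?_⟩
  · have hleftC' : DerE Γ₁ ({C, D} + Δ₁) := by
      simpa [Multiset.insert_eq_cons, Multiset.cons_swap D C] using hleftC.weakenR D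
    have hleftD' : DerE Γ₁' ({C, D} + Δ₁') := by
      simpa [Multiset.insert_eq_cons] using hleftD.weakenR C
    simpa [Multiset.insert_eq_cons] using hrule {C, D} hleftC' hleftD'
  · grind [Fm.lang_or]
  · exact Finset.disjoint_union_left.2 ⟨hSC, hSD⟩

theorem generalize_left (ht : .inl t ∉ langM (Γ₁ + Δ₁))
    (h : HasInterpolant (insert t S) (.eq t t ::ₘ Γ₁) (.eq t t ::ₘ Γ₂) Δ₁ Δ₂) :
    HasInterpolant S Γ₁ Γ₂ Δ₁ Δ₂ := by
  obtain ⟨C, ⟨hleft, hright, hlang⟩, hS⟩ := h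
  obtain ⟨htC, hSC⟩ := Finset.disjoint_insert_right.1 hS
  obtain ⟨z, hz⟩ := Tm.exists_var_notMem (S ∪ (C.ter ∪ (C.boundVars ∪
    (terM Γ₁ ∪ terM Δ₁ ∪ (boundVarsM Γ₁ ∪ boundVarsM (C ::ₘ Δ₁))))))
  rw [Finset.notMem_union, Finset.notMem_union, Finset.notMem_union, Finset.notMem_union] at hz
  obtain ⟨hzS, hzC, hzBound, hzTer, hzBoundM⟩ := hz
  have ht' : t ∉ terM Γ₁ ∧ t ∉ terM Δ₁ := by simpa using ht
  refine ⟨.all z (C.subst t (.var z)), ⟨?_, ?_, ?_⟩, by simp [Fm.boundVars, hzS, hSC]⟩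
  · exact hleft.refl.generalizeR ht'.1 ht'.2 hzTer hzBoundM
  · rw [Multiset.cons_swap] at hright
    exact hright.refl.instantiateL htC hzBound hzC
  · have hCt := C.lang_all_subst_subset t z
    grind [langM_cons, langM_add, Fm.lang_eq]

/-- The formulas `t = t` in the hypothesis make `t` a common term of the two halves; by Ref they
cost nothing. -/
theorem eliminate_term (h : HasInterpolant (insert t S) (.eq t t ::ₘ Γ₁) (.eq t t ::ₘ Γ₂) Δ₁ Δ₂) :
    HasInterpolant S Γ₁ Γ₂ Δ₁ Δ₂ := by
  by_cases ht₁ : .inl t ∈ langM (Γ₁ + Δ₁)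
  · by_cases ht₂ : .inl t ∈ langM (Γ₂ + Δ₂)
    · obtain ⟨C, ⟨hleft, hright, hlang⟩, hS⟩ := h
      refine ⟨C, ⟨hleft.refl, .refl (Multiset.cons_swap _ _ Γ₂ ▸ hright), ?_⟩,
        hS.mono_right (Finset.subset_insert _ _)⟩
      grind [langM_cons, langM_add, Fm.lang_eq]
    · exact (generalize_left ht₂ h.symm).symm
  · exact generalize_left ht₁ h

theorem repl_cross (hP : P.isAtom)
    (h : HasInterpolant S (.eq s t ::ₘ Γ₁)
      (P.subst (.var x) t ::ₘ P.subst (.var x) s ::ₘ Γ₂) Δ₁ Δ₂) :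
    HasInterpolant S (.eq s s ::ₘ .eq t t ::ₘ .eq s t ::ₘ Γ₁)
      (.eq s s ::ₘ .eq t t ::ₘ P.subst (.var x) s ::ₘ Γ₂) Δ₁ Δ₂ := by
  obtain ⟨C, ⟨hleft, hright, hlang⟩, hS⟩ := h
  have hleft' : DerE (.eq s t ::ₘ Γ₁) (.and (.eq s t) C ::ₘ Δ₁) := .andR (.ax trivial) hleft
  have hright' : DerE (.and (.eq s t) C ::ₘ P.subst (.var x) s ::ₘ Γ₂) Δ₂ := by
    refine .andL ?_
    rw [Multiset.cons_swap C]
    refine .repl hP (t := t) ?_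
    simpa only [Multiset.cons_swap] using hright.weakenL (.eq s t)
  refine ⟨.and (.eq s t) C, ⟨(hleft'.weakenL _).weakenL _, ?_, ?_⟩, ?_⟩
  · simpa only [Multiset.cons_swap] using (hright'.weakenL (.eq t t)).weakenL (.eq s s)
  · have hPt := hP.lang_subst_subset_lang_subst (.var x) s t
    grind [langM_cons, langM_add, Fm.lang_eq, Fm.lang_and]
  · simpa [Fm.boundVars] using hS

end HasInterpolant

/-! ### Interpolation for the rules of the calculus -/

theorem exists_cons_of_add_eq_cons {α : Type*} {a : α} {Γ Γ₁ Γ₂ : Multiset α}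
    (h : Γ₁ + Γ₂ = a ::ₘ Γ) :
    (∃ Γ₁', Γ₁ = a ::ₘ Γ₁' ∧ Γ₁' + Γ₂ = Γ) ∨ ∃ Γ₂', Γ₂ = a ::ₘ Γ₂' ∧ Γ₁ + Γ₂' = Γ := by
  have ha : a ∈ Γ₁ + Γ₂ := h ▸ Multiset.mem_cons_self a Γ
  refine (Multiset.mem_add.1 ha).imp (fun ha₁ => ?_) fun ha₂ => ?_
  · obtain ⟨Γ₁', rfl⟩ := Multiset.exists_cons_of_mem ha₁
    exact ⟨Γ₁', rfl, by simpa using h⟩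
  · obtain ⟨Γ₂', rfl⟩ := Multiset.exists_cons_of_mem ha₂
    exact ⟨Γ₂', rfl, by simpa using h⟩

/-- Every partition of the sequent `Γ ⇒ Δ` has split-interpolants whose bound variables avoid any
given finite set. -/
def Interpolable (Γ Δ : Multiset Fm) : Prop :=
  ∀ (S : Finset Tm) (Γ₁ Γ₂ Δ₁ Δ₂ : Multiset Fm), Γ₁ + Γ₂ = Γ → Δ₁ + Δ₂ = Δ →
    HasInterpolant S Γ₁ Γ₂ Δ₁ Δ₂

namespace Interpolable

variable {A B P : Fm} {Γ Δ : Multiset Fm} {s t : Tm} {x y : ℕ}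

theorem of_principal_antecedent
    (h : ∀ (S : Finset Tm) (Γ₁ Γ₂ Δ₁ Δ₂ : Multiset Fm), Γ₁ + Γ₂ = Γ → Δ₁ + Δ₂ = Δ →
      HasInterpolant S (A ::ₘ Γ₁) Γ₂ Δ₁ Δ₂) :
    Interpolable (A ::ₘ Γ) Δ := by
  intro S Γ₁ Γ₂ Δ₁ Δ₂ hΓ hΔ
  obtain ⟨Γ₁, rfl, hΓ'⟩ | ⟨Γ₂, rfl, hΓ'⟩ := exists_cons_of_add_eq_cons hΓ
  · exact h S Γ₁ Γ₂ Δ₁ Δ₂ hΓ' hΔ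
  · exact (h S Γ₂ Γ₁ Δ₂ Δ₁ (add_comm Γ₁ Γ₂ ▸ hΓ') (add_comm Δ₁ Δ₂ ▸ hΔ)).symm

theorem of_principal_succedent
    (h : ∀ (S : Finset Tm) (Γ₁ Γ₂ Δ₁ Δ₂ : Multiset Fm), Γ₁ + Γ₂ = Γ → Δ₁ + Δ₂ = Δ →
      HasInterpolant S Γ₁ Γ₂ (A ::ₘ Δ₁) Δ₂) :
    Interpolable Γ (A ::ₘ Δ) := by
  intro S Γ₁ Γ₂ Δ₁ Δ₂ hΓ hΔ
  obtain ⟨Δ₁, rfl, hΔ'⟩ | ⟨Δ₂, rfl, hΔ'⟩ := exists_cons_of_add_eq_cons hΔ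
  · exact h S Γ₁ Γ₂ Δ₁ Δ₂ hΓ hΔ'
  · exact (h S Γ₂ Γ₁ Δ₂ Δ₁ (add_comm Γ₁ Γ₂ ▸ hΓ) (add_comm Δ₁ Δ₂ ▸ hΔ')).symm

theorem ax (hP : P.isAtom) : Interpolable (P ::ₘ Γ) (P ::ₘ Δ) := by
  refine of_principal_antecedent fun S Γ₁ Γ₂ Δ₁ Δ₂ _ hΔ => ?_
  obtain ⟨Δ₁, rfl, -⟩ | ⟨Δ₂, rfl, -⟩ := exists_cons_of_add_eq_cons hΔ
  · exact .of_left (.ax hP)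
  · exact ⟨P, ⟨.ax hP, .ax hP, by grind [langM_cons, langM_add]⟩, by simp [hP.boundVars_eq_empty]⟩

theorem botL : Interpolable (.bot ::ₘ Γ) Δ :=
  of_principal_antecedent fun _ _ _ _ _ _ _ => .of_left .botL

theorem topR : Interpolable Γ (.top ::ₘ Δ) :=
  of_principal_succedent fun _ _ _ _ _ _ _ => .of_left .topR

theorem andL (h : Interpolable (A ::ₘ B ::ₘ Γ) Δ) : Interpolable (.and A B ::ₘ Γ) Δ := by
  refine of_principal_antecedent fun S Γ₁ Γ₂ Δ₁ Δ₂ hΓ hΔ => ?_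
  refine (h S (A ::ₘ B ::ₘ Γ₁) Γ₂ Δ₁ Δ₂ (by simp [hΓ]) hΔ).map_left ?_ fun Θ _ => .andL
  grind [langM_cons, langM_add, Fm.lang_and]

theorem andR (hA : Interpolable Γ (A ::ₘ Δ)) (hB : Interpolable Γ (B ::ₘ Δ)) :
    Interpolable Γ (.and A B ::ₘ Δ) := by
  refine of_principal_succedent fun S Γ₁ Γ₂ Δ₁ Δ₂ hΓ hΔ => ?_
  refine (hA S Γ₁ Γ₂ (A ::ₘ Δ₁) Δ₂ hΓ (by simp [hΔ])).map₂_left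
    (hB S Γ₁ Γ₂ (B ::ₘ Δ₁) Δ₂ hΓ (by simp [hΔ])) ?_ fun Θ => ?_
  · grind [langM_cons, langM_add, Fm.lang_and]
  · simpa only [Multiset.add_cons] using .andR

theorem orL (hA : Interpolable (A ::ₘ Γ) Δ) (hB : Interpolable (B ::ₘ Γ) Δ) :
    Interpolable (.or A B ::ₘ Γ) Δ := by
  refine of_principal_antecedent fun S Γ₁ Γ₂ Δ₁ Δ₂ hΓ hΔ => ?_
  refine (hA S (A ::ₘ Γ₁) Γ₂ Δ₁ Δ₂ (by simp [hΓ]) hΔ).map₂_left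
    (hB S (B ::ₘ Γ₁) Γ₂ Δ₁ Δ₂ (by simp [hΓ]) hΔ) ?_ fun Θ => .orL
  grind [langM_cons, langM_add, Fm.lang_or]

theorem orR (h : Interpolable Γ (A ::ₘ B ::ₘ Δ)) : Interpolable Γ (.or A B ::ₘ Δ) := by
  refine of_principal_succedent fun S Γ₁ Γ₂ Δ₁ Δ₂ hΓ hΔ => ?_
  refine (h S Γ₁ Γ₂ (A ::ₘ B ::ₘ Δ₁) Δ₂ hΓ (by simp [hΔ])).map_left ?_ fun Θ _ => ?_
  · grind [langM_cons, langM_add, Fm.lang_or]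
  · simpa only [Multiset.add_cons] using .orR

theorem impL (hA : Interpolable Γ (A ::ₘ Δ)) (hB : Interpolable (B ::ₘ Γ) Δ) :
    Interpolable (.imp A B ::ₘ Γ) Δ := by
  refine of_principal_antecedent fun S Γ₁ Γ₂ Δ₁ Δ₂ hΓ hΔ => ?_
  refine (hA S Γ₁ Γ₂ (A ::ₘ Δ₁) Δ₂ hΓ (by simp [hΔ])).map₂_left
    (hB S (B ::ₘ Γ₁) Γ₂ Δ₁ Δ₂ (by simp [hΓ]) hΔ) ?_ fun Θ => ?_
  · grind [langM_cons, langM_add, Fm.lang_imp]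
  · simpa only [Multiset.add_cons] using .impL

theorem impR (h : Interpolable (A ::ₘ Γ) (B ::ₘ Δ)) : Interpolable Γ (.imp A B ::ₘ Δ) := by
  refine of_principal_succedent fun S Γ₁ Γ₂ Δ₁ Δ₂ hΓ hΔ => ?_
  refine (h S (A ::ₘ Γ₁) Γ₂ (B ::ₘ Δ₁) Δ₂ (by simp [hΓ]) (by simp [hΔ])).map_left ?_ fun Θ _ => ?_
  · grind [langM_cons, langM_add, Fm.lang_imp]
  · simpa only [Multiset.add_cons] using .impR

theorem allL (ht : A.freeFor t (.var x))
    (h : Interpolable (A.subst (.var x) t ::ₘ .all x A ::ₘ Γ) Δ) :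
    Interpolable (.all x A ::ₘ Γ) Δ := by
  refine of_principal_antecedent fun S Γ₁ Γ₂ Δ₁ Δ₂ hΓ hΔ => ?_
  have hprem := h (insert t S) (A.subst (.var x) t ::ₘ .all x A ::ₘ Γ₁) Γ₂ Δ₁ Δ₂
    (by simp [hΓ]) hΔ
  suffices HasInterpolant (insert t S) (.eq t t ::ₘ .all x A ::ₘ Γ₁) Γ₂ Δ₁ Δ₂ from
    (this.weaken_right (.eq t t)).eliminate_term
  refine hprem.map_left ?_ fun Θ _ hder => (DerE.allL ht hder).weakenL _
  have hlang := A.lang_subst_subset (.var x) t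
  grind [langM_cons, langM_add, Fm.lang_all, Fm.lang_eq]

theorem exR (ht : A.freeFor t (.var x))
    (h : Interpolable Γ (.ex x A ::ₘ A.subst (.var x) t ::ₘ Δ)) :
    Interpolable Γ (.ex x A ::ₘ Δ) := by
  refine of_principal_succedent fun S Γ₁ Γ₂ Δ₁ Δ₂ hΓ hΔ => ?_
  have hprem := h (insert t S) Γ₁ Γ₂ (.ex x A ::ₘ A.subst (.var x) t ::ₘ Δ₁) Δ₂
    hΓ (by simp [hΔ])
  suffices HasInterpolant (insert t S) (.eq t t ::ₘ Γ₁) Γ₂ (.ex x A ::ₘ Δ₁) Δ₂ from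
    (this.weaken_right (.eq t t)).eliminate_term
  refine hprem.map_left ?_ fun Θ _ hder => ?_
  · have hlang := A.lang_subst_subset (.var x) t
    grind [langM_cons, langM_add, Fm.lang_ex, Fm.lang_eq]
  · simp only [Multiset.add_cons] at hder ⊢
    exact (DerE.exR ht hder).weakenL _

theorem allR (hyx : A.freeFor (.var y) (.var x))
    (hy : .var y ∉ terM Γ ∪ terM Δ ∪ (Fm.all x A).ter)
    (h : Interpolable Γ (A.subst (.var x) (.var y) ::ₘ Δ)) :
    Interpolable Γ (.all x A ::ₘ Δ) := by
  refine of_principal_succedent fun S Γ₁ Γ₂ Δ₁ Δ₂ hΓ hΔ => ?_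
  have hprem := h S Γ₁ Γ₂ (A.subst (.var x) (.var y) ::ₘ Δ₁) Δ₂ hΓ (by simp [hΔ])
  simp only [← hΓ, ← hΔ, terM_add] at hy
  have hyR : .inl (.var y) ∉ langM (Γ₂ + Δ₂) := by grind [langM_add, inl_mem_langM]
  refine hprem.map_left ?_ fun Θ hΘ hder => ?_
  · have hlang := A.lang_subst_subset (.var x) (.var y)
    grind [langM_cons, langM_add, Fm.lang_all]
  · rw [Multiset.add_cons] at hder ⊢
    have hyΘ : .var y ∉ terM Θ := fun hmem => hyR (hΘ (inl_mem_langM.2 hmem))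
    exact .allR hyx (by grind [terM_add]) hder

theorem exL (hyx : A.freeFor (.var y) (.var x))
    (hy : .var y ∉ terM Γ ∪ terM Δ ∪ (Fm.ex x A).ter)
    (h : Interpolable (A.subst (.var x) (.var y) ::ₘ Γ) Δ) :
    Interpolable (.ex x A ::ₘ Γ) Δ := by
  refine of_principal_antecedent fun S Γ₁ Γ₂ Δ₁ Δ₂ hΓ hΔ => ?_
  have hprem := h S (A.subst (.var x) (.var y) ::ₘ Γ₁) Γ₂ Δ₁ Δ₂ (by simp [hΓ]) hΔ
  simp only [← hΓ, ← hΔ, terM_add] at hy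
  have hyR : .inl (.var y) ∉ langM (Γ₂ + Δ₂) := by grind [langM_add, inl_mem_langM]
  refine hprem.map_left ?_ fun Θ hΘ hder => ?_
  · have hlang := A.lang_subst_subset (.var x) (.var y)
    grind [langM_cons, langM_add, Fm.lang_ex]
  · have hyΘ : .var y ∉ terM Θ := fun hmem => hyR (hΘ (inl_mem_langM.2 hmem))
    exact .exL hyx (by grind [terM_add]) hder

theorem refl (h : Interpolable (.eq s s ::ₘ Γ) Δ) : Interpolable Γ Δ := by
  intro S Γ₁ Γ₂ Δ₁ Δ₂ hΓ hΔ
  have hprem := h (insert s S) (.eq s s ::ₘ Γ₁) Γ₂ Δ₁ Δ₂ (by simp [hΓ]) hΔ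
  exact (hprem.weaken_right (.eq s s)).eliminate_term

theorem repl (hP : P.isAtom)
    (h : Interpolable (P.subst (.var x) t ::ₘ .eq s t ::ₘ P.subst (.var x) s ::ₘ Γ) Δ) :
    Interpolable (.eq s t ::ₘ P.subst (.var x) s ::ₘ Γ) Δ := by
  refine of_principal_antecedent fun S Γ₁ Γ₂ Δ₁ Δ₂ hΓ hΔ => ?_
  obtain ⟨Γ₁, rfl, rfl⟩ | ⟨Γ₂, rfl, rfl⟩ := exists_cons_of_add_eq_cons hΓ
  · refine (h S (P.subst (.var x) t ::ₘ .eq s t ::ₘ P.subst (.var x) s ::ₘ Γ₁) Γ₂ Δ₁ Δ₂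
      (by simp) hΔ).map_left ?_ fun Θ _ => .repl hP
    have hlang := hP.lang_subst_subset_lang_subst (.var x) s t
    grind [langM_cons, langM_add, Fm.lang_eq]
  · have hprem := h (insert s (insert t S)) (.eq s t ::ₘ Γ₁)
      (P.subst (.var x) t ::ₘ P.subst (.var x) s ::ₘ Γ₂) Δ₁ Δ₂
      (by simp [Multiset.cons_swap]) hΔ
    exact (hprem.repl_cross hP).eliminate_term.eliminate_term

end Interpolable

theorem DerE.interpolable {Γ Δ : Multiset Fm} (h : DerE Γ Δ) : Interpolable Γ Δ := by
  induction h with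
  | ax hP => exact .ax hP
  | botL => exact .botL
  | topR => exact .topR
  | andL _ ih => exact ih.andL
  | andR _ _ ihA ihB => exact ihA.andR ihB
  | orL _ _ ihA ihB => exact ihA.orL ihB
  | orR _ ih => exact ih.orR
  | impL _ _ ihA ihB => exact ihA.impL ihB
  | impR _ ih => exact ih.impR
  | allL ht _ ih => exact ih.allL ht
  | allR hyx hy _ ih => exact ih.allR hyx hy
  | exL hyx hy _ ih => exact ih.exL hyx hy
  | exR ht _ ih => exact ih.exR ht
  | refl _ ih => exact ih.refl
  | repl hP _ ih => exact ih.repl hP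

/-- Maehara's lemma for first-order logic with identity: in G=
(G extended with Ref and Repl), every partition Γ₁;Γ₂⇒Δ₁;Δ₂ of a derivable
sequent has a split-interpolant. -/
theorem maehara_identity (Γ₁ Γ₂ Δ₁ Δ₂ : Multiset Fm)
    (hder : DerE (Γ₁ + Γ₂) (Δ₁ + Δ₂)) :
    ∃ C : Fm, SplitInterpolantE Γ₁ Γ₂ Δ₁ Δ₂ C := by
  obtain ⟨C, hC, -⟩ := hder.interpolable ∅ Γ₁ Γ₂ Δ₁ Δ₂ rfl rfl
  exact ⟨C, hC⟩
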